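/- Let M = cQ + εD ∈ 𝔻ℍ[t] be a bounded monic reduced motion polynomial of degree n with monic c ∈ ℝ[t], Q, D ∈ ℍ[t], mrpf(Q) = 1, and ν(M) = c²·ν(Q) = Nⁿ for some irreducible quadratic N ∈ ℝ[t]. Suppose M = (Q_L + εD_L)·(c + εD')·(Q_R + εD_R) with Q_L, Q_R, D_L, D_R, D' ∈ ℍ[t], where each of the three factors is a product of monic linear motion polynomials. Define g_L := mrpf(c, Q*·D) and g_R := mrpf(c, D·Q*). Then g_L divides Q_L·Q_L* and g_R divides Q_R·Q_R* in ℝ[t]. -/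

import Mathlib

open Polynomial DualNumber TrivSqZeroExt

noncomputable section

/-- The real quaternions. -/
abbrev Hq : Type := Quaternion ℝ

/-- The dual quaternions. -/
abbrev DHq : Type := DualNumber Hq

/-- Conjugation of a dual quaternion: `(p + ε d)* = p* + ε d*`. -/
instance : Star DHq := ⟨fun x => inl (star x.fst) + inr (star x.snd)⟩

/-- Coefficient-wise (quaternion) conjugation of a polynomial. -/
def cstar {R : Type*} [Semiring R] [Star R] (A : R[X]) : R[X] :=
  A.sum fun n a => Polynomial.C (star a) * Polynomial.X ^ n

/-- The embedding `ℝ[t] → ℍ[t]`. -/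
def qPoly (f : ℝ[X]) : Hq[X] := f.map (algebraMap ℝ Hq)

/-- The embedding `ℍ[t] → 𝔻ℍ[t]` (primal part). -/
def dhQ (P : Hq[X]) : DHq[X] := P.map (inlHom Hq Hq)

/-- The embedding `ℝ[t] → 𝔻ℍ[t]`. -/
def dPoly (f : ℝ[X]) : DHq[X] := dhQ (qPoly f)

/-- The dual quaternion polynomial `P + ε D` with primal part `P` and dual part `D`. -/
def mp (P D : Hq[X]) : DHq[X] := dhQ P + Polynomial.C ε * dhQ D

/-- The primal part of a dual quaternion polynomial. -/
def primal (A : DHq[X]) : Hq[X] := A.map (fstHom ℝ Hq Hq).toRingHom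

/-- A motion polynomial: a dual quaternion polynomial whose norm polynomial
`ν(M) = M·M*` is a nonzero real polynomial. -/
def IsMotion (M : DHq[X]) : Prop := ∃ f : ℝ[X], f ≠ 0 ∧ M * cstar M = dPoly f

/-- A real polynomial divides a quaternion polynomial. -/
def RDvdQ (f : ℝ[X]) (A : Hq[X]) : Prop := ∃ B : Hq[X], A = qPoly f * B

/-- A real polynomial divides a dual quaternion polynomial. -/
def RDvdD (f : ℝ[X]) (A : DHq[X]) : Prop := ∃ B : DHq[X], A = dPoly f * B

/-- `g` is the greatest common monic real polynomial divisor of a quaternion polynomial `A`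
(with itself), i.e. `g = mrpf A`. -/
def IsMrpfQ (g : ℝ[X]) (A : Hq[X]) : Prop :=
  g.Monic ∧ RDvdQ g A ∧ ∀ f : ℝ[X], f.Monic → RDvdQ f A → f ∣ g

/-- `g` is the greatest common monic real polynomial divisor of `c ∈ ℝ[t]` and a quaternion
polynomial `A`, i.e. `g = mrpf(c, A)`. -/
def IsMrpf2 (g : ℝ[X]) (c : ℝ[X]) (A : Hq[X]) : Prop :=
  g.Monic ∧ g ∣ c ∧ RDvdQ g A ∧
    ∀ f : ℝ[X], f.Monic → f ∣ c → RDvdQ f A → f ∣ g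

/-- `g` is the greatest common monic real polynomial divisor of `c ∈ ℝ[t]` and two quaternion
polynomials `A` and `B`, i.e. `g = mrpf(c, A, B)`. -/
def IsMrpf3 (g : ℝ[X]) (c : ℝ[X]) (A B : Hq[X]) : Prop :=
  g.Monic ∧ g ∣ c ∧ RDvdQ g A ∧ RDvdQ g B ∧
    ∀ f : ℝ[X], f.Monic → f ∣ c → RDvdQ f A → RDvdQ f B → f ∣ g

/-- A quaternion polynomial is reduced: `mrpf = 1`, i.e. it has only constant real
polynomial factors. -/
def ReducedQ (A : Hq[X]) : Prop := ∀ f : ℝ[X], f.Monic → RDvdQ f A → f = 1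

/-- A dual quaternion polynomial is reduced: `mrpf = 1`. -/
def ReducedD (A : DHq[X]) : Prop := ∀ f : ℝ[X], f.Monic → RDvdD f A → f = 1

/-- Boundedness of a (monic reduced) motion polynomial: `mrpf` of its primal part has
no real root, equivalently no linear real polynomial `t - a` divides the primal part. -/
def BoundedD (M : DHq[X]) : Prop :=
  ∀ a : ℝ, ¬ RDvdQ (Polynomial.X - Polynomial.C a) (primal M)

/-- A generic motion polynomial: monic, a motion polynomial, with `mrpf` of the primal
part equal to `1`. -/
def GenericD (M : DHq[X]) : Prop :=
  M.Monic ∧ IsMotion M ∧ ReducedQ (primal M)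

/-- The monic linear dual quaternion polynomial `t - p - ε d`. -/
def lin (p d : Hq) : DHq[X] := mp (Polynomial.X - Polynomial.C p) (-Polynomial.C d)

/-- `M` admits a factorization into monic linear motion polynomial factors. -/
def HasLinFact (M : DHq[X]) : Prop :=
  ∃ L : List DHq, (∀ h ∈ L, IsMotion (Polynomial.X - Polynomial.C h)) ∧
    M = (L.map fun h => Polynomial.X - Polynomial.C h).prod

end

/-!
Modulo `c`, the dual part `D` of `M` is `QL * D' * QR`, so `Q* * D` is congruent to
`ν(QL) * (QR* * D' * QR)`. All real polynomials in sight divide powers of `N`; hence if `gL` did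
not divide `ν(QL)`, then `N` would divide both `c` and `QR* * D' * QR`. Since `c` is real, `D'` is
purely vectorial, and splitting one linear factor off `c + ε D'` shows that `N` divides `ν(D')`:
modulo `N`, the vector `D'` is isotropic. Nondegeneracy of the trace form then upgrades
`N ∣ QR* * D' * QR` to `N ∣ D' * QR`, so `N` divides `c` and `D`, and `M` is not reduced.
Conjugation exchanges the two sides.
-/

section Generalities

theorem dvd_or_mul_dvd_of_dvd_prime_pow {R : Type*} [CommMonoidWithZero R] [IsCancelMulZero R]
    {p a b : R} {m n : ℕ} (hp : Prime p) (ha : a ∣ p ^ m) (hb : b ∣ p ^ n) :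
    a ∣ b ∨ b * p ∣ a := by
  obtain ⟨i, -, hi⟩ := (dvd_prime_pow hp m).1 ha
  obtain ⟨j, -, hj⟩ := (dvd_prime_pow hp n).1 hb
  rcases le_or_gt i j with hij | hij
  · exact .inl (hi.dvd.trans ((pow_dvd_pow p hij).trans hj.symm.dvd))
  · refine .inr ((mul_dvd_mul_right hj.dvd p).trans ?_)
    rw [← pow_succ]
    exact (pow_dvd_pow p hij).trans hi.symm.dvd

theorem associated_of_dvd_irreducible_pow {K : Type*} [Field K] {f N : K[X]} {m : ℕ}
    (hN : Irreducible N) (hf : f ∣ N ^ m) (hdeg : f.natDegree = N.natDegree) :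
    Associated f N := by
  obtain ⟨j, -, hj⟩ := (dvd_prime_pow hN.prime m).1 hf
  have hj1 : j * N.natDegree = 1 * N.natDegree := by
    rw [← natDegree_pow, ← natDegree_eq_of_degree_eq (degree_eq_degree_of_associated hj), hdeg,
      one_mul]
  rwa [Nat.eq_of_mul_eq_mul_right hN.natDegree_pos hj1, pow_one] at hj

theorem commute_map_of_forall_commute {R S : Type*} [Semiring R] [Semiring S] {φ : R →+* S}
    (hφ : ∀ r s, Commute (φ r) s) (f : R[X]) (A : S[X]) : Commute (f.map φ) A := by
  ext n
  rw [coeff_mul, coeff_mul, ← Finset.Nat.sum_antidiagonal_swap]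
  refine Finset.sum_congr rfl fun x _ => ?_
  simpa only [coeff_map, Prod.fst_swap, Prod.snd_swap] using (hφ _ _).eq

end Generalities

section Conjugation

variable {R : Type*} [Semiring R] [StarRing R]

@[simp]
theorem coeff_cstar (A : R[X]) (n : ℕ) : (cstar A).coeff n = star (A.coeff n) := by
  simp only [cstar, sum_def, finsetSum_coeff, coeff_C_mul_X_pow, Finset.sum_ite_eq]
  split_ifs with hn
  · rfl
  · rw [notMem_support_iff.1 hn, star_zero]

@[simp]
theorem cstar_cstar (A : R[X]) : cstar (cstar A) = A := by
  ext n : 1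
  simp only [coeff_cstar, star_star]

@[simp]
theorem cstar_zero : cstar (0 : R[X]) = 0 := by
  ext n : 1
  simp only [coeff_cstar, coeff_zero, star_zero]

@[simp]
theorem cstar_one : cstar (1 : R[X]) = 1 := by
  ext n : 1
  rw [coeff_cstar, coeff_one]
  split_ifs <;> simp only [star_one, star_zero]

@[simp]
theorem cstar_mul (A B : R[X]) : cstar (A * B) = cstar B * cstar A := by
  ext n : 1
  rw [coeff_cstar, coeff_mul, coeff_mul, star_sum, ← Finset.Nat.sum_antidiagonal_swap]
  refine Finset.sum_congr rfl fun x _ => ?_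
  simp only [Prod.fst_swap, Prod.snd_swap, star_mul, coeff_cstar]

theorem natDegree_cstar (A : R[X]) : (cstar A).natDegree = A.natDegree := by
  have hsupp : (cstar A).support = A.support := by
    ext n
    simp only [mem_support_iff, coeff_cstar, ne_eq, star_eq_zero]
  simp only [natDegree, degree, hsupp]

end Conjugation

section RealPolynomials

theorem qPoly_commute (f : ℝ[X]) (A : Hq[X]) : Commute (qPoly f) A :=
  commute_map_of_forall_commute (fun r s => Algebra.commutes r s) f A

@[simp]
theorem qPoly_mul (f g : ℝ[X]) : qPoly (f * g) = qPoly f * qPoly g :=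
  Polynomial.map_mul _

theorem qPoly_injective : Function.Injective qPoly :=
  Polynomial.map_injective _ (algebraMap ℝ Hq).injective

theorem qPoly_ne_zero {f : ℝ[X]} (hf : f ≠ 0) : qPoly f ≠ 0 :=
  (Polynomial.map_ne_zero_iff (algebraMap ℝ Hq).injective).2 hf

@[simp]
theorem cstar_qPoly (f : ℝ[X]) : cstar (qPoly f) = qPoly f := by
  ext n : 1
  rw [coeff_cstar, qPoly, coeff_map]
  exact Quaternion.star_coe _

theorem qPoly_dvd_qPoly {f g : ℝ[X]} (h : f ∣ g) : qPoly f ∣ qPoly g :=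
  Polynomial.map_dvd _ h

theorem qPoly_dvd_mul_left {f : ℝ[X]} {A : Hq[X]} (h : qPoly f ∣ A) (B : Hq[X]) :
    qPoly f ∣ B * A := by
  obtain ⟨A', rfl⟩ := h
  exact ⟨B * A', by rw [← mul_assoc, ← (qPoly_commute f B).eq, mul_assoc]⟩

theorem qPoly_dvd_cstar {f : ℝ[X]} {A : Hq[X]} (h : qPoly f ∣ A) : qPoly f ∣ cstar A := by
  obtain ⟨A', rfl⟩ := h
  exact ⟨cstar A', by rw [cstar_mul, cstar_qPoly, (qPoly_commute f _).eq]⟩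

theorem dvd_or_qPoly_dvd_of_irreducible {N s : ℝ[X]} (hN : Irreducible N) {A : Hq[X]}
    (h : qPoly N ∣ qPoly s * A) : N ∣ s ∨ qPoly N ∣ A := by
  refine or_iff_not_imp_left.2 fun hs => ?_
  obtain ⟨a, b, hab⟩ := hN.coprime_iff_not_dvd.2 hs
  have hA : A = qPoly N * (qPoly a * A) + qPoly b * (qPoly s * A) := by
    have hab' : qPoly N * qPoly a + qPoly b * qPoly s = 1 := by
      rw [(qPoly_commute N _).eq, ← qPoly_mul, ← qPoly_mul, qPoly, qPoly, ← Polynomial.map_add, hab,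
        Polynomial.map_one]
    rw [← mul_assoc, ← mul_assoc, ← add_mul, hab', one_mul]
  rw [hA]
  exact dvd_add (dvd_mul_right _ _) (qPoly_dvd_mul_left h _)

end RealPolynomials

section TraceAndNorm

/-- The coefficientwise real part of a quaternion polynomial, i.e. half its trace `A + A*`, viewed
in `ℝ[t]`. -/
noncomputable def rePoly (A : Hq[X]) : ℝ[X] :=
  A.sum fun n a => monomial n a.re

/-- The norm polynomial `ν(A) = A * A*` of a quaternion polynomial, viewed in `ℝ[t]`; the real part
discards nothing, see `qPoly_normPoly`. -/
noncomputable def normPoly (A : Hq[X]) : ℝ[X] :=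
  rePoly (A * cstar A)

@[simp]
theorem coeff_rePoly (A : Hq[X]) (n : ℕ) : (rePoly A).coeff n = (A.coeff n).re := by
  simp only [rePoly, sum_def, finsetSum_coeff, coeff_monomial, Finset.sum_ite_eq']
  split_ifs with hn
  · rfl
  · rw [notMem_support_iff.1 hn]
    rfl

theorem rePoly_mul_comm (A B : Hq[X]) : rePoly (A * B) = rePoly (B * A) := by
  have re_sum (s : Finset (ℕ × ℕ)) (f : ℕ × ℕ → Hq) : (∑ x ∈ s, f x).re = ∑ x ∈ s, (f x).re :=
    map_sum (QuaternionAlgebra.reₗ (-1 : ℝ) 0 (-1)) f s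
  ext n
  rw [coeff_rePoly, coeff_rePoly, coeff_mul, coeff_mul, ← Finset.Nat.sum_antidiagonal_swap,
    re_sum, re_sum]
  refine Finset.sum_congr rfl fun x _ => ?_
  simp only [Prod.fst_swap, Prod.snd_swap, Quaternion.re_mul]
  ring

theorem self_add_cstar (A : Hq[X]) : A + cstar A = qPoly (C 2 * rePoly A) := by
  ext n : 1
  rw [coeff_add, coeff_cstar, Quaternion.self_add_star', qPoly, coeff_map, coeff_C_mul,
    coeff_rePoly]
  rfl

theorem qPoly_rePoly_of_cstar_eq_self {A : Hq[X]} (hA : cstar A = A) : qPoly (rePoly A) = A := by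
  ext n : 1
  have hn : star (A.coeff n) = A.coeff n := by rw [← coeff_cstar, hA]
  rw [qPoly, coeff_map, coeff_rePoly]
  exact (Quaternion.star_eq_self.1 hn).symm

theorem qPoly_normPoly (A : Hq[X]) : qPoly (normPoly A) = A * cstar A :=
  qPoly_rePoly_of_cstar_eq_self (by rw [cstar_mul, cstar_cstar])

@[simp]
theorem normPoly_cstar (A : Hq[X]) : normPoly (cstar A) = normPoly A := by
  rw [normPoly, normPoly, cstar_cstar, rePoly_mul_comm]

theorem qPoly_normPoly' (A : Hq[X]) : qPoly (normPoly A) = cstar A * A := by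
  rw [← normPoly_cstar, qPoly_normPoly, cstar_cstar]

theorem normPoly_mul (A B : Hq[X]) : normPoly (A * B) = normPoly A * normPoly B := by
  apply qPoly_injective
  calc qPoly (normPoly (A * B)) = A * (B * cstar B) * cstar A := by
        simp only [qPoly_normPoly, cstar_mul, mul_assoc]
    _ = qPoly (normPoly A * normPoly B) := by
        rw [← qPoly_normPoly B, ← (qPoly_commute _ A).eq, mul_assoc, ← qPoly_normPoly A,
          ← qPoly_mul, mul_comm]

@[simp]
theorem normPoly_qPoly (f : ℝ[X]) : normPoly (qPoly f) = f ^ 2 :=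
  qPoly_injective (by rw [qPoly_normPoly, cstar_qPoly, ← qPoly_mul, sq])

theorem natDegree_normPoly (A : Hq[X]) : (normPoly A).natDegree = 2 * A.natDegree := by
  rcases eq_or_ne A 0 with rfl | hA
  · simp only [normPoly, rePoly, zero_mul, sum_zero_index, natDegree_zero, mul_zero]
  · have hA' : cstar A ≠ 0 := fun h => hA (by rw [← cstar_cstar A, h, cstar_zero])
    have hdeg : (qPoly (normPoly A)).natDegree = 2 * A.natDegree := by
      rw [qPoly_normPoly, natDegree_mul hA hA', natDegree_cstar, two_mul]
    rwa [qPoly, natDegree_map] at hdeg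

/-- The standard real basis `1, i, j, k` of the quaternions. -/
def quaternionUnit : Fin 4 → Hq :=
  ![1, ⟨0, 1, 0, 0⟩, ⟨0, 0, 1, 0⟩, ⟨0, 0, 0, 1⟩]

open scoped Quaternion in
theorem quaternion_eq_sum_re_mul_star_unit (x : Hq) :
    x = ∑ m, ((x * quaternionUnit m).re : Hq) * star (quaternionUnit m) := by
  simp only [Fin.sum_univ_four, Quaternion.coe_mul_eq_smul]
  ext <;> simp [Quaternion.re_mul] <;> simp [quaternionUnit]

theorem eq_sum_rePoly_mul_star_unit (A : Hq[X]) :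
    A = ∑ m, qPoly (rePoly (A * C (quaternionUnit m))) * C (star (quaternionUnit m)) := by
  ext n : 1
  simp only [finsetSum_coeff, coeff_mul_C, qPoly, coeff_map, coeff_rePoly]
  exact quaternion_eq_sum_re_mul_star_unit _

theorem qPoly_dvd_of_forall_dvd_rePoly_mul {f : ℝ[X]} {A : Hq[X]}
    (h : ∀ B : Hq[X], f ∣ rePoly (A * B)) : qPoly f ∣ A := by
  rw [eq_sum_rePoly_mul_star_unit A]
  exact Finset.dvd_sum fun m _ => (qPoly_dvd_qPoly (h _)).mul_right _

end TraceAndNorm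

section IsotropicVectors

theorem qPoly_dvd_mul_of_dvd_cstar_mul_mul {N : ℝ[X]} (hN : Irreducible N) {W U : Hq[X]}
    (hW : cstar W = -W) (hNW : N ∣ normPoly W) (h : qPoly N ∣ cstar U * W * U) :
    qPoly N ∣ W * U := by
  by_contra hWU
  have hUW : ¬ qPoly N ∣ cstar U * W := fun hdvd => hWU <| by
    simpa only [cstar_mul, cstar_cstar, hW, neg_mul, dvd_neg] using qPoly_dvd_cstar hdvd
  refine hWU (qPoly_dvd_of_forall_dvd_rePoly_mul fun B => ?_)
  -- Multiplying `U* * W` by the trace of `U * B * W` gives a sum of two multiples of `N`.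
  have htrace : qPoly (C 2 * rePoly (W * U * B)) * (cstar U * W) =
      cstar U * W * U * (B * W) + cstar U * qPoly (normPoly W) * cstar (U * B) := by
    rw [mul_assoc W, rePoly_mul_comm, (qPoly_commute _ _).eq, ← self_add_cstar, qPoly_normPoly,
      cstar_mul (U * B) W]
    noncomm_ring
  have hdvd : qPoly N ∣ qPoly (C 2 * rePoly (W * U * B)) * (cstar U * W) := by
    rw [htrace]
    exact dvd_add (h.mul_right _) ((qPoly_dvd_mul_left (qPoly_dvd_qPoly hNW) _).mul_right _)
  exact (dvd_C_mul two_ne_zero).1 ((dvd_or_qPoly_dvd_of_irreducible hN hdvd).resolve_right hUW)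

theorem dvd_normPoly_left_or_dvd {n : ℕ} {N g : ℝ[X]} {A W B : Hq[X]} (hN : Irreducible N)
    (hW : cstar W = -W) (hNW : N ∣ normPoly W) (hg : g ∣ N ^ n) (hA : normPoly A ∣ N ^ n)
    (h : qPoly g ∣ cstar (A * B) * (A * W * B)) :
    g ∣ normPoly A ∨ N ∣ g ∧ qPoly N ∣ A * W * B := by
  refine (dvd_or_mul_dvd_of_dvd_prime_pow hN.prime hg hA).imp_right fun hNg => ?_
  have hA0 : normPoly A ≠ 0 := ne_zero_of_dvd_ne_zero (pow_ne_zero n hN.ne_zero) hA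
  have hnorm : cstar (A * B) * (A * W * B) = qPoly (normPoly A) * (cstar B * W * B) := by
    calc cstar (A * B) * (A * W * B) = cstar B * (cstar A * A) * (W * B) := by
          simp only [cstar_mul, mul_assoc]
      _ = qPoly (normPoly A) * (cstar B * W * B) := by
          rw [← qPoly_normPoly', ← (qPoly_commute _ _).eq]
          simp only [mul_assoc]
  have hBWB : qPoly N ∣ cstar B * W * B := by
    have hdvd := (qPoly_dvd_qPoly hNg).trans h
    rwa [hnorm, qPoly_mul, mul_dvd_mul_iff_left (qPoly_ne_zero hA0)] at hdvd
  refine ⟨(dvd_mul_left _ _).trans hNg, ?_⟩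
  rw [mul_assoc]
  exact qPoly_dvd_mul_left (qPoly_dvd_mul_of_dvd_cstar_mul_mul hN hW hNW hBWB) A

theorem dvd_normPoly_right_or_dvd {n : ℕ} {N g : ℝ[X]} {A W B : Hq[X]} (hN : Irreducible N)
    (hW : cstar W = -W) (hNW : N ∣ normPoly W) (hg : g ∣ N ^ n) (hB : normPoly B ∣ N ^ n)
    (h : qPoly g ∣ A * W * B * cstar (A * B)) :
    g ∣ normPoly B ∨ N ∣ g ∧ qPoly N ∣ A * W * B := by
  have hconj : cstar (A * W * B) = -(cstar B * W * cstar A) := by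
    simp only [cstar_mul, hW, neg_mul, mul_neg, mul_assoc]
  have h' : qPoly g ∣ cstar (cstar B * cstar A) * (cstar B * W * cstar A) := by
    simpa only [cstar_mul (A * W * B), cstar_cstar, hconj, mul_neg, dvd_neg, cstar_mul (cstar B)]
      using qPoly_dvd_cstar h
  rw [← normPoly_cstar] at hB ⊢
  refine (dvd_normPoly_left_or_dvd hN hW hNW hg hB h').imp_right
    (And.imp_right fun hdvd => ?_)
  rw [← cstar_cstar (A * W * B), hconj]
  exact qPoly_dvd_cstar (dvd_neg.2 hdvd)

end IsotropicVectors

section DualQuaternionPolynomials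

@[simp]
theorem fst_star (x : DHq) : (star x).fst = star x.fst :=
  add_zero _

@[simp]
theorem snd_star (x : DHq) : (star x).snd = star x.snd :=
  zero_add _

noncomputable instance : StarRing DHq where
  star_involutive x := TrivSqZeroExt.ext (by simp) (by simp)
  star_mul x y := TrivSqZeroExt.ext (by simp) (by simp [add_comm])
  star_add x y := TrivSqZeroExt.ext (by simp) (by simp)

theorem dPoly_commute (f : ℝ[X]) (A : DHq[X]) : Commute (dPoly f) A := by
  rw [dPoly, dhQ, qPoly, Polynomial.map_map]
  have hcentral (r : ℝ) (x : DHq) : Commute ((inlHom Hq Hq).comp (algebraMap ℝ Hq) r) x :=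
    Algebra.commutes r x
  exact commute_map_of_forall_commute hcentral f A

theorem C_eps_commute (A : DHq[X]) : Commute (C (ε : DHq)) A := by
  ext n : 1
  rw [coeff_C_mul, coeff_mul_C]
  exact (DualNumber.commute_eps_left _).eq

theorem coeff_mp (P D : Hq[X]) (n : ℕ) :
    (mp P D).coeff n = inl (P.coeff n) + inr (D.coeff n) := by
  simp only [mp, dhQ, coeff_add, coeff_map, coeff_C_mul]
  ext <;> simp

theorem mp_inj {P D P' D' : Hq[X]} : mp P D = mp P' D' ↔ P = P' ∧ D = D' := by
  refine ⟨fun h => ⟨?_, ?_⟩, fun ⟨hP, hD⟩ => hP ▸ hD ▸ rfl⟩ <;> ext n : 1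
  · simpa [coeff_mp] using congrArg (fun A : DHq[X] => (A.coeff n).fst) h
  · simpa [coeff_mp] using congrArg (fun A : DHq[X] => (A.coeff n).snd) h

theorem mp_mul (P D P' D' : Hq[X]) : mp P D * mp P' D' = mp (P * P') (P * D' + D * P') := by
  have hεε : C (ε : DHq) * C ε = 0 := by rw [← C_mul, DualNumber.eps_mul_eps, C_0]
  have hεP : dhQ P * C ε = C ε * dhQ P := (C_eps_commute _).eq.symm
  have hεD : dhQ D * C ε = C ε * dhQ D := (C_eps_commute _).eq.symm
  calc mp P D * mp P' D'
      = dhQ P * dhQ P' + dhQ P * C ε * dhQ D' + C ε * dhQ D * dhQ P'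
          + C ε * (dhQ D * C ε) * dhQ D' := by
        simp only [mp]
        noncomm_ring
    _ = dhQ P * dhQ P' + C ε * (dhQ P * dhQ D' + dhQ D * dhQ P') := by
        rw [hεP, hεD, ← mul_assoc (C ε) (C ε), hεε]
        noncomm_ring
    _ = mp (P * P') (P * D' + D * P') := by
        simp only [mp, dhQ, Polynomial.map_add, Polynomial.map_mul]

theorem cstar_mp (P D : Hq[X]) : cstar (mp P D) = mp (cstar P) (cstar D) := by
  ext n : 1
  simp only [coeff_cstar, coeff_mp, star_add]
  exact TrivSqZeroExt.ext (by simp) (by simp)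

theorem dPoly_eq_mp (f : ℝ[X]) : dPoly f = mp (qPoly f) 0 := by
  simp only [dPoly, mp, dhQ, Polynomial.map_zero, mul_zero, add_zero]

theorem one_eq_mp : (1 : DHq[X]) = mp 1 0 := by
  simp only [mp, dhQ, Polynomial.map_one, Polynomial.map_zero, mul_zero, add_zero]

theorem exists_eq_mp (A : DHq[X]) : ∃ P D, A = mp P D := by
  induction A using Polynomial.induction_on' with
  | add A B hA hB =>
    obtain ⟨P, D, rfl⟩ := hA
    obtain ⟨P', D', rfl⟩ := hB
    refine ⟨P + P', D + D', ?_⟩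
    simp only [mp, dhQ, Polynomial.map_add]
    noncomm_ring
  | monomial n x =>
    refine ⟨monomial n x.fst, monomial n x.snd, ?_⟩
    ext m : 1
    rw [coeff_mp, coeff_monomial, coeff_monomial, coeff_monomial]
    split_ifs <;> ext <;> simp

theorem X_sub_C_eq_mp (h : DHq) : X - C h = mp (X - C h.fst) (-C h.snd) := by
  ext n : 1
  rw [coeff_mp, coeff_sub, coeff_sub, coeff_neg, coeff_C, coeff_X, coeff_C, coeff_X, coeff_C]
  ext <;> split_ifs <;> simp

theorem ReducedD.isUnit_of_dvd {f : ℝ[X]} {P D : Hq[X]} (h : ReducedD (mp P D)) (hf : f ≠ 0)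
    (hP : qPoly f ∣ P) (hD : qPoly f ∣ D) : IsUnit f := by
  have hdvd : qPoly (normalize f) ∣ qPoly f := qPoly_dvd_qPoly (normalize_associated f).dvd
  obtain ⟨A, rfl⟩ := hdvd.trans hP
  obtain ⟨B, rfl⟩ := hdvd.trans hD
  refine normalize_eq_one.1 (h _ (monic_normalize hf) ⟨mp A B, ?_⟩)
  rw [dPoly_eq_mp, mp_mul, zero_mul, add_zero]

end DualQuaternionPolynomials

section MotionPolynomials

theorem isMotion_one : IsMotion 1 :=
  ⟨1, one_ne_zero, by simp only [cstar_one, mul_one, dPoly, dhQ, qPoly, Polynomial.map_one]⟩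

theorem IsMotion.mul {A B : DHq[X]} (hA : IsMotion A) (hB : IsMotion B) : IsMotion (A * B) := by
  obtain ⟨f, hf0, hf⟩ := hA
  obtain ⟨g, hg0, hg⟩ := hB
  refine ⟨f * g, mul_ne_zero hf0 hg0, ?_⟩
  calc A * B * cstar (A * B) = A * (B * cstar B) * cstar A := by
        simp only [cstar_mul, mul_assoc]
    _ = dPoly (g * f) := by
        rw [hg, ← (dPoly_commute g A).eq, mul_assoc, hf]
        simp only [dPoly, dhQ, qPoly_mul, Polynomial.map_mul]
    _ = dPoly (f * g) := by rw [mul_comm]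

theorem HasLinFact.isMotion {M : DHq[X]} (h : HasLinFact M) : IsMotion M := by
  obtain ⟨L, hL, rfl⟩ := h
  exact List.prod_induction IsMotion (fun _ _ => IsMotion.mul) isMotion_one
    (List.forall_mem_map.2 hL)

theorem IsMotion.mul_cstar_dual_eq_neg {P D : Hq[X]} (h : IsMotion (mp P D)) :
    P * cstar D = -(D * cstar P) := by
  obtain ⟨f, -, hf⟩ := h
  rw [cstar_mp, mp_mul, dPoly_eq_mp, mp_inj] at hf
  exact eq_neg_of_add_eq_zero_left hf.2

theorem IsMotion.cstar_dual_eq_neg {c : ℝ[X]} {D : Hq[X]} (hc : c ≠ 0)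
    (h : IsMotion (mp (qPoly c) D)) : cstar D = -D := by
  apply mul_left_cancel₀ (qPoly_ne_zero hc)
  rw [h.mul_cstar_dual_eq_neg, cstar_qPoly, mul_neg, (qPoly_commute c D).eq]

theorem normPoly_dvd_normPoly_dual_of_mp_eq_mul {c : ℝ[X]} {D P E R F : Hq[X]} (hP : P ≠ 0)
    (hmotion : IsMotion (mp P E)) (hPc : normPoly P ∣ c)
    (h : mp (qPoly c) D = mp P E * mp R F) : normPoly P ∣ normPoly D := by
  obtain ⟨c', rfl⟩ := hPc
  rw [mp_mul, mp_inj] at h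
  obtain ⟨hPR, hD⟩ := h
  have hR : R = cstar P * qPoly c' := by
    apply mul_left_cancel₀ hP
    rw [← hPR, qPoly_mul, qPoly_normPoly, mul_assoc]
  have hDP : D = P * (F - cstar E * qPoly c') := by
    rw [hD, hR, ← mul_assoc, ← neg_eq_iff_eq_neg.2 hmotion.mul_cstar_dual_eq_neg]
    noncomm_ring
  rw [hDP, normPoly_mul]
  exact dvd_mul_right _ _

theorem HasLinFact.dvd_normPoly_dual {n : ℕ} {N c : ℝ[X]} {D : Hq[X]} (hN : Irreducible N)
    (hN2 : N.natDegree = 2) (hc : c ∣ N ^ n) (h : HasLinFact (mp (qPoly c) D)) :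
    N ∣ normPoly D := by
  obtain ⟨_ | ⟨a, L⟩, hL, hprod⟩ := h
  · rw [List.map_nil, List.prod_nil, one_eq_mp, mp_inj] at hprod
    simp only [hprod.2, normPoly, rePoly, zero_mul, sum_zero_index, dvd_zero]
  · obtain ⟨R, F, hRF⟩ := exists_eq_mp (L.map fun h => X - C h).prod
    have ha := hL a List.mem_cons_self
    rw [List.map_cons, List.prod_cons, hRF, X_sub_C_eq_mp] at hprod
    rw [X_sub_C_eq_mp] at ha
    set P := X - C a.fst
    have hcsq : c ^ 2 = normPoly P * normPoly R := by
      have hcPR : qPoly c = P * R := (mp_inj.1 (hprod.trans (mp_mul _ _ _ _))).1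
      rw [← normPoly_mul, ← hcPR, normPoly_qPoly]
    have hPN : Associated (normPoly P) N := by
      refine associated_of_dvd_irreducible_pow hN (m := n * 2) ?_ ?_
      · rw [pow_mul]
        exact (Dvd.intro _ hcsq.symm).trans (pow_dvd_pow_of_dvd hc 2)
      · rw [natDegree_normPoly, natDegree_X_sub_C, hN2]
    have hNc : N ∣ c := hN.prime.dvd_of_dvd_pow (hPN.symm.dvd.trans (Dvd.intro _ hcsq.symm))
    exact hPN.symm.dvd.trans <|
      normPoly_dvd_normPoly_dual_of_mp_eq_mul (X_sub_C_ne_zero _) ha (hPN.dvd.trans hNc) hprod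

end MotionPolynomials

theorem eq_mul_and_exists_dual_eq_of_mp_eq_mul {c : ℝ[X]} {Q D QL DL D' QR DR : Hq[X]} (hc : c ≠ 0)
    (h : mp (qPoly c * Q) D = mp QL DL * mp (qPoly c) D' * mp QR DR) :
    Q = QL * QR ∧ ∃ E, D = QL * D' * QR + qPoly c * E := by
  rw [mp_mul, mp_mul, mp_inj] at h
  obtain ⟨hQ, hD⟩ := h
  refine ⟨mul_left_cancel₀ (qPoly_ne_zero hc) ?_, QL * DR + DL * QR, ?_⟩
  · rw [hQ, ← (qPoly_commute c QL).eq, mul_assoc]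
  · rw [hD, ← (qPoly_commute c QL).eq, ← (qPoly_commute c DL).eq]
    noncomm_ring

theorem gcd_divides_outer_norms_general
    {n : ℕ} {c : ℝ[X]} {Q D : Hq[X]} {N : ℝ[X]} {QL QR DL DR D' : Hq[X]} {gL gR : ℝ[X]}
    (hred : ReducedD (mp (qPoly c * Q) D))
    (hN2 : N.natDegree = 2) (hNirr : Irreducible N)
    (hQnorm : qPoly (c ^ 2) * (Q * cstar Q) = qPoly (N ^ n))
    (hsplit : mp (qPoly c * Q) D = mp QL DL * mp (qPoly c) D' * mp QR DR)
    (hC : HasLinFact (mp (qPoly c) D'))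
    (hgL : IsMrpf2 gL c (cstar Q * D)) (hgR : IsMrpf2 gR c (D * cstar Q)) :
    RDvdQ gL (QL * cstar QL) ∧ RDvdQ gR (QR * cstar QR) := by
  have hNn : N ^ n ≠ 0 := pow_ne_zero n hNirr.ne_zero
  rw [← qPoly_normPoly, ← qPoly_mul, qPoly_injective.eq_iff] at hQnorm
  have hcN : c ∣ N ^ n := hQnorm ▸ (dvd_pow_self c two_ne_zero).mul_right _
  have hc0 : c ≠ 0 := ne_zero_of_dvd_ne_zero hNn hcN
  obtain ⟨rfl, E, rfl⟩ := eq_mul_and_exists_dual_eq_of_mp_eq_mul hc0 hsplit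
  have hQN : normPoly QL * normPoly QR ∣ N ^ n := normPoly_mul QL QR ▸ Dvd.intro_left _ hQnorm
  have hskew : cstar D' = -D' := hC.isMotion.cstar_dual_eq_neg hc0
  have hiso : N ∣ normPoly D' := hC.dvd_normPoly_dual hNirr hN2 hcN
  have hnot (g : ℝ[X]) (hg : g ∣ c) : ¬ (N ∣ g ∧ qPoly N ∣ QL * D' * QR) := fun ⟨hNg, hdvd⟩ => by
    have hNc : qPoly N ∣ qPoly c := qPoly_dvd_qPoly (hNg.trans hg)
    exact hNirr.not_isUnit <|
      hred.isUnit_of_dvd hNirr.ne_zero (hNc.mul_right _) (dvd_add hdvd (hNc.mul_right _))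
  obtain ⟨-, hgLc, hgLD, -⟩ := hgL
  obtain ⟨-, hgRc, hgRD, -⟩ := hgR
  change qPoly gL ∣ _ at hgLD
  change qPoly gR ∣ _ at hgRD
  rw [mul_add, dvd_add_left (qPoly_dvd_mul_left ((qPoly_dvd_qPoly hgLc).mul_right _) _)] at hgLD
  rw [add_mul, dvd_add_left (((qPoly_dvd_qPoly hgRc).mul_right _).mul_right _)] at hgRD
  rw [← qPoly_normPoly, ← qPoly_normPoly]
  exact ⟨qPoly_dvd_qPoly <| (dvd_normPoly_left_or_dvd hNirr hskew hiso (hgLc.trans hcN)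
      ((dvd_mul_right _ _).trans hQN) hgLD).resolve_right (hnot gL hgLc),
    qPoly_dvd_qPoly <| (dvd_normPoly_right_or_dvd hNirr hskew hiso (hgRc.trans hcN)
      ((dvd_mul_left _ _).trans hQN) hgRD).resolve_right (hnot gR hgRc)⟩

/-- In a three-part factorization of a primary-norm motion polynomial, `g_L` divides
`ν(Q_L)` and `g_R` divides `ν(Q_R)`. -/
theorem gcd_divides_outer_norms
    (n : ℕ) (c : ℝ[X]) (Q D : Hq[X]) (N : ℝ[X]) (M : DHq[X])
    (QL QR DL DR D' : Hq[X]) (gL gR : ℝ[X])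
    (hM : M = mp (qPoly c * Q) D)
    (hc : c.Monic) (hmonic : M.Monic) (hmotion : IsMotion M)
    (hred : ReducedD M) (hbdd : BoundedD M) (hQred : ReducedQ Q)
    (hdeg : M.natDegree = n)
    (hN2 : N.natDegree = 2) (hNirr : Irreducible N)
    (hQnorm : qPoly (c ^ 2) * (Q * cstar Q) = qPoly (N ^ n))
    (hnorm : M * cstar M = dPoly (N ^ n))
    (hsplit : M = mp QL DL * mp (qPoly c) D' * mp QR DR)
    (hL : HasLinFact (mp QL DL)) (hC : HasLinFact (mp (qPoly c) D'))
    (hR : HasLinFact (mp QR DR))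
    (hgL : IsMrpf2 gL c (cstar Q * D)) (hgR : IsMrpf2 gR c (D * cstar Q)) :
    RDvdQ gL (QL * cstar QL) ∧ RDvdQ gR (QR * cstar QR) := by
  subst hM
  exact gcd_divides_outer_norms_general hred hN2 hNirr hQnorm hsplit hC hgL hgR
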